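/- Let α > 1, and let a, b, c be real numbers with a > 0 and ab − c² > 0. For s, t ≥ 0, write I(s,t) = ∫_D x^{s} y^{t} (xy − z²)^{(α−3)/2} exp(−(a x + b y + 2 c z)) d(x,y,z), where D = {(x,y,z) ∈ ℝ³ : x > 0, y > 0, xy − z² > 0}, and let ρ² = c²/(ab) ∈ [0,1). Then for every ν₁, ν₂ ≥ 0: I(ν₁,ν₂) · I(0,0) ≥ I(ν₁,0) · I(0,ν₂) · [1 + (1 − ρ²)^{α/2 + ν₁ + ν₂} · (∑_{k=0}^∞ ((ν₁ν₂)^k ρ^{2k} / ((α/2)_k · k!)) − 1)] ≥ I(ν₁,0) · I(0,ν₂). (This is the quantitative Gaussian-product-type inequality E(X₁₁^{ν₁} X₂₂^{ν₂}) ≥ E(X₁₁^{ν₁}) E(X₂₂^{ν₂}) [1 + (1−ρ²)^{α/2+ν₁+ν₂}(₀F₁(α/2; ν₁ν₂ρ²) − 1)] ≥ E(X₁₁^{ν₁}) E(X₂₂^{ν₂}) for the bivariate Wishart distribution.) -/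

import Mathlib

open MeasureTheory Polynomial Real

/-- `I(s,t) = ∫_D x^s y^t (xy − z²)^{(α−3)/2} exp(−(ax + by + 2cz)) d(x,y,z)`,
the mixed moment integral of the bivariate Wishart distribution over
`D = {(x,y,z) : x > 0, y > 0, xy − z² > 0}`. -/
noncomputable def wishartMomentIntegral (α a b c s t : ℝ) : ℝ :=
  ∫ p in {q : ℝ × ℝ × ℝ | 0 < q.1 ∧ 0 < q.2.1 ∧ 0 < q.1 * q.2.1 - q.2.2 ^ 2},
    p.1 ^ s * p.2.1 ^ t * (p.1 * p.2.1 - p.2.2 ^ 2) ^ ((α - 3) / 2) *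
      Real.exp (-(a * p.1 + b * p.2.1 + 2 * c * p.2.2))


lemma gpi_negbin (x r : ℝ) (hr0 : 0 ≤ r) (hr1 : r < 1) :
    HasSum (fun k : ℕ => (ascPochhammer ℝ k).eval x * r ^ k / (k.factorial : ℝ))
      ((1 - r) ^ (-x)) := by
  have h := Real.one_div_one_sub_rpow_hasFPowerSeriesOnBall_zero x
  have hy : r ∈ Metric.eball (0 : ℝ) 1 := by
    rw [Metric.mem_eball, edist_zero_right, Real.enorm_eq_ofReal hr0]
    exact_mod_cast ENNReal.ofReal_lt_one.2 hr1
  have h2 := h.hasSum hy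
  rw [zero_add] at h2
  rw [Real.rpow_neg (by linarith), ← one_div]
  suffices hh : (fun k : ℕ => (ascPochhammer ℝ k).eval x * r ^ k / (k.factorial : ℝ)) =
      (fun n => (FormalMultilinearSeries.ofScalars ℝ (fun n : ℕ => Ring.choose (x + (n:ℝ) - 1) n) n)
        fun _ => r) by
    rw [hh]; exact h2
  funext k
  rw [FormalMultilinearSeries.ofScalars_apply_eq, smul_eq_mul, ← Ring.multichoose_eq]
  have h3 := Ring.factorial_nsmul_multichoose_eq_ascPochhammer x k
  rw [Polynomial.ascPochhammer_smeval_eq_eval, nsmul_eq_mul] at h3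
  rw [← h3]
  have : (k.factorial : ℝ) ≠ 0 := by positivity
  field_simp

lemma gpi_poch_pos (x : ℝ) (hx : 0 < x) (k : ℕ) : 0 < (ascPochhammer ℝ k).eval x :=
  ascPochhammer_pos k x hx

lemma gpi_termwise (β m n : ℝ) (hβ : 0 < β) (hm : 0 ≤ m) (hn : 0 ≤ n) (k : ℕ) :
    (ascPochhammer ℝ (k+1)).eval β * (ascPochhammer ℝ (k+1)).eval (β + m + n) + (m * n) ^ (k+1)
      ≤ (ascPochhammer ℝ (k+1)).eval (β + m) * (ascPochhammer ℝ (k+1)).eval (β + n) := by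
  induction k with
  | zero => simp; nlinarith
  | succ k ih =>
    rw [ascPochhammer_succ_eval, ascPochhammer_succ_eval (k+1) (β + m + n),
      ascPochhammer_succ_eval (k+1) (β + m), ascPochhammer_succ_eval (k+1) (β + n), pow_succ]
    have hmn := mul_nonneg hm hn
    have h1 := (mul_pos (gpi_poch_pos β hβ (k+1)) (gpi_poch_pos (β + m + n) (by linarith) (k+1))).le
    set A := (ascPochhammer ℝ (k+1)).eval β * (ascPochhammer ℝ (k+1)).eval (β + m + n)
    set B := (ascPochhammer ℝ (k+1)).eval (β + m) * (ascPochhammer ℝ (k+1)).eval (β + n)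
    have hP := pow_nonneg hmn (k+1)
    set P := (m * n) ^ (k+1)
    set j : ℝ := ((k+1 : ℕ) : ℝ)
    have hj : 0 ≤ j := Nat.cast_nonneg _
    have e : (β + m + j) * (β + n + j) = (β + j) * (β + m + n + j) + m * n := by ring
    have h2 : 0 ≤ (β + j) * (β + m + n + j) := by positivity
    calc _ = A * ((β + j) * (β + m + n + j)) + P * (m * n) := by ring
      _ ≤ (A + P) * ((β + j) * (β + m + n + j) + m * n) := by
        nlinarith [mul_nonneg h1 hmn, mul_nonneg hP h2]
      _ ≤ B * ((β + j) * (β + m + n + j) + m * n) := by gcongr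
      _ = B * ((β + m + j) * (β + n + j)) := by rw [e]
      _ = _ := by ring

lemma gpi_summable (β m n r : ℝ) (hβ : 0 < β) (hm : 0 ≤ m) (hn : 0 ≤ n)
    (hr0 : 0 ≤ r) (hr1 : r < 1) :
    Summable (fun k : ℕ => (ascPochhammer ℝ k).eval (β + m) * (ascPochhammer ℝ k).eval (β + n) /
      (ascPochhammer ℝ k).eval β * r ^ k / (k.factorial : ℝ)) := by
  have hlim : Filter.Tendsto (fun k : ℕ => r * ((β + m + k) / (β + k)) * ((β + n + k) / (1 + k)))
      Filter.atTop (nhds r) := by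
    have key : ∀ u v : ℝ, Filter.Tendsto (fun k : ℕ => (u + (k:ℝ)) / (v + k)) Filter.atTop (nhds 1) := by
      intro u v
      simpa using tendsto_add_mul_div_add_mul_atTop_nhds u v 1 (one_ne_zero)
    simpa using ((key (β + m) β).const_mul r).mul (key (β + n) 1)
  obtain ⟨q, hq1, hq2⟩ := exists_between hr1
  refine summable_of_ratio_norm_eventually_le hq2 ?_
  filter_upwards [hlim.eventually (gt_mem_nhds hq1)] with k hk
  have p1 := gpi_poch_pos β hβ k
  have p2 := gpi_poch_pos (β + m) (by linarith) k
  have p3 := gpi_poch_pos (β + n) (by linarith) k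
  rw [ascPochhammer_succ_eval k β, ascPochhammer_succ_eval k (β + m), ascPochhammer_succ_eval k (β + n),
    Nat.factorial_succ, pow_succ]
  set A := (ascPochhammer ℝ k).eval β
  set B := (ascPochhammer ℝ k).eval (β + m)
  set C := (ascPochhammer ℝ k).eval (β + n)
  rw [Real.norm_of_nonneg (by positivity), Real.norm_of_nonneg (by positivity)]
  have : (k.factorial : ℝ) > 0 := by positivity
  calc _ = (r * ((β + m + k) / (β + k)) * ((β + n + k) / (1 + k))) *
        (B * C / A * r ^ k / k.factorial) := by
        have : (1 + k : ℝ) ≠ 0 := by positivity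
        have : (β + k : ℝ) ≠ 0 := by positivity
        push_cast
        field_simp
        ring
    _ ≤ _ := by gcongr

/-- Summability of the `₀F₁` series. -/
lemma gpi_summable01 (β m n r : ℝ) (hβ : 0 < β) (hm : 0 ≤ m) (hn : 0 ≤ n)
    (hr0 : 0 ≤ r) (hr1 : r < 1) :
    Summable (fun k : ℕ => (m * n) ^ k * r ^ k / ((ascPochhammer ℝ k).eval β * (k.factorial : ℝ))) := by
  refine Summable.of_nonneg_of_le (fun k => ?_) (fun k => ?_) (gpi_summable β m n r hβ hm hn hr0 hr1)
  · have := gpi_poch_pos β hβ k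
    positivity
  · have p1 := gpi_poch_pos β hβ k
    have h : (m * n) ^ k ≤ (ascPochhammer ℝ k).eval (β + m) * (ascPochhammer ℝ k).eval (β + n) := by
      cases k with
      | zero => simp
      | succ k =>
        have := gpi_termwise β m n hβ hm hn k
        have h1 := (mul_pos (gpi_poch_pos β hβ (k+1))
          (gpi_poch_pos (β + m + n) (by linarith) (k+1))).le
        linarith
    calc _ = (m * n) ^ k / (ascPochhammer ℝ k).eval β * r ^ k / (k.factorial : ℝ) := by
          field_simp
      _ ≤ _ := by gcongr

lemma gpi_series (β m n r : ℝ) (hβ : 0 < β) (hm : 0 ≤ m) (hn : 0 ≤ n)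
    (hr0 : 0 ≤ r) (hr1 : r < 1) :
    (1 - r) ^ (-(β + m + n)) +
      ((∑' k : ℕ, (m * n) ^ k * r ^ k / ((ascPochhammer ℝ k).eval β * (k.factorial : ℝ))) - 1) ≤
    ∑' k : ℕ, (ascPochhammer ℝ k).eval (β + m) * (ascPochhammer ℝ k).eval (β + n) /
      (ascPochhammer ℝ k).eval β * r ^ k / (k.factorial : ℝ) := by
  have s1 := gpi_summable β m n r hβ hm hn hr0 hr1
  have s2 := gpi_summable01 β m n r hβ hm hn hr0 hr1
  have s3 := gpi_negbin (β + m + n) r hr0 hr1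
  rw [← s3.tsum_eq, s1.tsum_eq_zero_add, s2.tsum_eq_zero_add, s3.summable.tsum_eq_zero_add]
  simp only [ascPochhammer_zero, Polynomial.eval_one, pow_zero, Nat.factorial_zero, Nat.cast_one, mul_one,
    div_one, add_sub_cancel_left]
  have t2 := (summable_nat_add_iff 1).2 s2
  have t3 := (summable_nat_add_iff 1).2 s3.summable
  rw [add_assoc, ← t3.tsum_add t2]
  refine add_le_add le_rfl ?_
  refine (t3.add t2).tsum_le_tsum (fun k => ?_) ((summable_nat_add_iff 1).2 s1)
  have p1 := gpi_poch_pos β hβ (k+1)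
  have h := gpi_termwise β m n hβ hm hn k
  calc _ = ((ascPochhammer ℝ (k+1)).eval β * (ascPochhammer ℝ (k+1)).eval (β + m + n)
        + (m * n) ^ (k+1)) / (ascPochhammer ℝ (k+1)).eval β * r ^ (k+1) / ((k+1).factorial : ℝ) := by
        field_simp
    _ ≤ _ := by gcongr

lemma gpi_zeroF_ge (β m n r : ℝ) (hβ : 0 < β) (hm : 0 ≤ m) (hn : 0 ≤ n)
    (hr0 : 0 ≤ r) (hr1 : r < 1) :
    1 ≤ ∑' k : ℕ, (m * n) ^ k * r ^ k / ((ascPochhammer ℝ k).eval β * (k.factorial : ℝ)) := by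
  have s2 := gpi_summable01 β m n r hβ hm hn hr0 hr1
  have := s2.le_tsum 0 (fun k _ => by
    have := gpi_poch_pos β hβ k
    positivity)
  simpa using this

lemma gpi_Gamma_add (x : ℝ) (hx : 0 < x) (k : ℕ) :
    Real.Gamma (x + k) = (ascPochhammer ℝ k).eval x * Real.Gamma x := by
  induction k with
  | zero => simp
  | succ k ih =>
    rw [Nat.cast_succ, ← add_assoc, Real.Gamma_add_one (by positivity), ih, ascPochhammer_succ_eval]
    ring

lemma gpi_Gamma_half (k : ℕ) :
    Real.Gamma ((k:ℝ) + 1/2) * 4 ^ k * k.factorial = (2 * k).factorial * √π := by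
  induction k with
  | zero => simpa using Real.Gamma_one_half_eq
  | succ k ih =>
    have : ((k + 1 : ℕ) : ℝ) + 1/2 = (k + 1/2) + 1 := by push_cast; ring
    rw [this, Real.Gamma_add_one (by positivity), show 2 * (k+1) = 2*k+1+1 by ring,
      Nat.factorial_succ (2*k+1), Nat.factorial_succ (2*k), Nat.factorial_succ k]
    push_cast
    rw [pow_succ]
    linear_combination (2 * (k:ℝ) + 1) * (2 * k + 2) * ih

open Set ENNReal in
lemma gpi_gamma_lint (a p : ℝ) (ha : 0 < a) (hp : 0 < p) :
    ∫⁻ x in Ioi (0:ℝ), ENNReal.ofReal (x ^ (p - 1) * Real.exp (-(a * x))) =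
      ENNReal.ofReal ((1 / a) ^ p * Real.Gamma p) := by
  have h := Real.integral_rpow_mul_exp_neg_mul_Ioi hp ha
  have hpos : 0 < (1 / a) ^ p * Real.Gamma p :=
    mul_pos (by positivity) (Real.Gamma_pos_of_pos hp)
  rw [← h, ofReal_integral_eq_lintegral_ofReal]
  · by_contra hc
    rw [integral_undef hc] at h
    exact hpos.ne h
  · refine (ae_restrict_mem measurableSet_Ioi).mono (fun x hx => ?_)
    have : (0:ℝ) < x := hx
    simp only [Pi.zero_apply]
    positivity

open Set ENNReal in
lemma gpi_beta_lint (p q : ℝ) (hp : 0 < p) (hq : 0 < q) :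
    ∫⁻ u in Ioo (0:ℝ) 1, ENNReal.ofReal (u ^ (p - 1) * (1 - u) ^ (q - 1)) =
      ENNReal.ofReal (ProbabilityTheory.beta p q) := by
  have h := ProbabilityTheory.lintegral_betaPDF_eq_one hp hq
  have hb := ProbabilityTheory.beta_pos hp hq
  rw [ProbabilityTheory.lintegral_betaPDF] at h
  have h2 : ∀ x : ℝ, ENNReal.ofReal (1 / ProbabilityTheory.beta p q * x ^ (p - 1) * (1 - x) ^ (q - 1))
      = ENNReal.ofReal (1 / ProbabilityTheory.beta p q) *
        ENNReal.ofReal (x ^ (p - 1) * (1 - x) ^ (q - 1)) := by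
    intro x
    rw [← ENNReal.ofReal_mul (by positivity), mul_assoc]
  simp_rw [h2] at h
  rw [lintegral_const_mul' _ _ ofReal_ne_top] at h
  calc _ = ENNReal.ofReal (ProbabilityTheory.beta p q) * (ENNReal.ofReal (1 / ProbabilityTheory.beta p q) *
        ∫⁻ u in Ioo (0:ℝ) 1, ENNReal.ofReal (u ^ (p - 1) * (1 - u) ^ (q - 1))) := by
        rw [← mul_assoc, ← ENNReal.ofReal_mul hb.le, mul_one_div_cancel hb.ne', ofReal_one, one_mul]
    _ = _ := by rw [h, mul_one]

open Set ENNReal in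
lemma gpi_lint_neg (f : ℝ → ℝ≥0∞) : ∫⁻ z, f (-z) = ∫⁻ z, f z := by
  have h := lintegral_image_eq_lintegral_abs_deriv_mul (s := univ) (f := fun z : ℝ => -z)
    (f' := fun _ => -1) MeasurableSet.univ (fun x _ => (hasDerivAt_neg x).hasDerivWithinAt)
    (neg_injective.injOn) f
  have h2 : (fun z : ℝ => -z) '' univ = univ := by
    rw [image_univ]; exact neg_surjective.range_eq
  rw [h2] at h
  simpa using h.symm

open Set ENNReal in
lemma gpi_lint_even (f : ℝ → ℝ≥0∞) (hf : ∀ z, f (-z) = f z) :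
    ∫⁻ z, f z = 2 * ∫⁻ z in Ioi (0:ℝ), f z := by
  have h := lintegral_image_eq_lintegral_abs_deriv_mul (s := Ioi (0:ℝ)) (f := fun z : ℝ => -z)
    (f' := fun _ => -1) measurableSet_Ioi (fun x _ => (hasDerivAt_neg x).hasDerivWithinAt)
    (neg_injective.injOn) f
  have h2 : (fun z : ℝ => -z) '' Ioi 0 = Iio 0 := by simp
  rw [h2] at h
  simp [hf] at h
  rw [← lintegral_add_compl f (measurableSet_Ioi (a := (0:ℝ))), compl_Ioi,
    setLIntegral_congr Iio_ae_eq_Iic.symm, h, two_mul]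

open Set ENNReal in
lemma gpi_zmoment (w q : ℝ) (hw : 0 < w) (hq : 0 < q) (k : ℕ) :
    ∫⁻ z in {z : ℝ | 0 < w - z ^ 2}, ENNReal.ofReal ((w - z ^ 2) ^ (q - 1) * z ^ (2 * k)) =
      ENNReal.ofReal (w ^ (q + k - 1/2) * ProbabilityTheory.beta (k + 1/2) q) := by
  have hm : MeasurableSet {z : ℝ | 0 < w - z ^ 2} := measurableSet_lt (by fun_prop) (by fun_prop)
  rw [← lintegral_indicator hm, gpi_lint_even]
  swap
  · intro z
    simp only [indicator, mem_ofPred_eq, neg_sq, pow_mul]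
  rw [setLIntegral_indicator hm]
  have himg : {z : ℝ | 0 < w - z ^ 2} ∩ Ioi 0 = (fun u => √w * √u) '' Ioo 0 1 := by
    ext z
    simp only [mem_inter_iff, mem_ofPred_eq, mem_Ioi, mem_image, mem_Ioo]
    constructor
    · rintro ⟨h1, h2⟩
      refine ⟨z ^ 2 / w, ⟨by positivity, by rw [div_lt_one hw]; linarith⟩, ?_⟩
      rw [← Real.sqrt_mul hw.le, mul_div_cancel₀ _ hw.ne', Real.sqrt_sq h2.le]
    · rintro ⟨u, ⟨h1, h2⟩, rfl⟩
      rw [mul_pow, Real.sq_sqrt hw.le, Real.sq_sqrt h1.le]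
      exact ⟨by nlinarith, by positivity⟩
  rw [himg, lintegral_image_eq_lintegral_abs_deriv_mul (f' := fun u => √w * (1 / (2 * √u)))
    measurableSet_Ioo]
  · have : ∀ u ∈ Ioo (0:ℝ) 1, ENNReal.ofReal |√w * (1 / (2 * √u))| *
        ENNReal.ofReal ((w - (√w * √u) ^ 2) ^ (q - 1) * (√w * √u) ^ (2 * k)) =
        ENNReal.ofReal (w ^ (q + k - 1/2) / 2) *
          ENNReal.ofReal (u ^ ((k + 1/2 : ℝ) - 1) * (1 - u) ^ (q - 1)) := by
      rintro u ⟨h1, h2⟩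
      have h3 : 0 < 1 - u := by linarith
      rw [abs_of_nonneg (by positivity), ← ENNReal.ofReal_mul (by positivity),
        ← ENNReal.ofReal_mul (by positivity)]
      congr 1
      rw [pow_mul, mul_pow, Real.sq_sqrt hw.le, Real.sq_sqrt h1.le,
        show w - w * u = w * (1 - u) by ring, Real.mul_rpow hw.le h3.le, mul_pow,
        Real.sqrt_eq_rpow, Real.sqrt_eq_rpow,
        show q + k - 1/2 = 1/2 + ((q - 1) + (k:ℝ)) by ring, Real.rpow_add hw, Real.rpow_add hw,
        Real.rpow_natCast, show (k + 1/2 : ℝ) - 1 = (k:ℝ) - 1/2 by ring, Real.rpow_sub h1,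
        Real.rpow_natCast]
      field_simp
    rw [setLIntegral_congr_fun measurableSet_Ioo this, lintegral_const_mul' _ _ ofReal_ne_top,
      gpi_beta_lint _ _ (by positivity) hq, ← mul_assoc, ← ENNReal.ofReal_ofNat 2,
      ← ENNReal.ofReal_mul (by norm_num), ← ENNReal.ofReal_mul (by positivity)]
    congr 1
    ring
  · intro u hu
    exact ((Real.hasDerivAt_sqrt hu.1.ne').const_mul _).hasDerivWithinAt
  · intro u hu v hv huv
    have hw' : √w ≠ 0 := by positivity
    have := mul_left_cancel₀ hw' huv
    exact (Real.sqrt_inj hu.1.le hv.1.le).1 this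

open Set ENNReal in
lemma gpi_zint (w q c : ℝ) (hw : 0 < w) (hq : 0 < q) :
    ∫⁻ z in {z : ℝ | 0 < w - z ^ 2}, ENNReal.ofReal ((w - z ^ 2) ^ (q - 1) * Real.exp (-(2 * c * z))) =
      ∑' k : ℕ, ENNReal.ofReal ((2 * c) ^ (2 * k) / ((2 * k).factorial : ℝ) *
        ProbabilityTheory.beta (k + 1/2) q * w ^ (q + k - 1/2)) := by
  have hm : MeasurableSet {z : ℝ | 0 < w - z ^ 2} := measurableSet_lt (by fun_prop) (by fun_prop)
  have step1 : ∫⁻ z in {z : ℝ | 0 < w - z ^ 2}, ENNReal.ofReal ((w - z ^ 2) ^ (q - 1) * Real.exp (-(2 * c * z)))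
      = ∫⁻ z in {z : ℝ | 0 < w - z ^ 2}, ENNReal.ofReal ((w - z ^ 2) ^ (q - 1) * Real.cosh (2 * c * z)) := by
    rw [← lintegral_indicator hm, ← lintegral_indicator hm]
    set F := {z : ℝ | 0 < w - z ^ 2}.indicator
      fun z => ENNReal.ofReal ((w - z ^ 2) ^ (q - 1) * Real.exp (-(2 * c * z))) with hF
    have hFm : Measurable F := Measurable.indicator (by fun_prop) hm
    have h2 : 2 * ∫⁻ z, F z = 2 * ∫⁻ z, {z : ℝ | 0 < w - z ^ 2}.indicator
      (fun z => ENNReal.ofReal ((w - z ^ 2) ^ (q - 1) * Real.cosh (2 * c * z))) z := by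
      rw [two_mul]
      nth_rw 2 [← gpi_lint_neg]
      rw [← lintegral_add_left hFm, ← lintegral_const_mul' _ _ (by norm_num)]
      congr 1
      funext z
      simp only [hF, indicator, mem_ofPred_eq, neg_sq]
      split_ifs with hz
      · rw [← ENNReal.ofReal_add (by positivity) (by positivity), ← ENNReal.ofReal_ofNat 2,
          ← ENNReal.ofReal_mul (by norm_num), Real.cosh_eq]
        congr 1
        rw [show -(2 * c * -z) = 2 * c * z by ring]
        ring
      · simp
    exact (ENNReal.mul_right_inj (by norm_num) (by norm_num)).1 h2
  rw [step1]
  have step2 : ∀ z ∈ {z : ℝ | 0 < w - z ^ 2},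
      ENNReal.ofReal ((w - z ^ 2) ^ (q - 1) * Real.cosh (2 * c * z)) =
      ∑' k : ℕ, ENNReal.ofReal ((2 * c) ^ (2 * k) / ((2 * k).factorial : ℝ)) *
        ENNReal.ofReal ((w - z ^ 2) ^ (q - 1) * z ^ (2 * k)) := by
    intro z hz
    have hz' : 0 < w - z ^ 2 := hz
    have hs := (Real.hasSum_cosh (2 * c * z)).mul_left ((w - z ^ 2) ^ (q - 1))
    rw [← hs.tsum_eq, ENNReal.ofReal_tsum_of_nonneg _ hs.summable]
    · congr 1
      funext k
      rw [← ENNReal.ofReal_mul (by rw [pow_mul]; positivity)]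
      congr 1
      rw [mul_pow]
      ring
    · intro k
      rw [pow_mul]; positivity
  rw [setLIntegral_congr_fun hm step2, lintegral_tsum (fun k => by fun_prop)]
  congr 1
  funext k
  rw [lintegral_const_mul' _ _ ofReal_ne_top, gpi_zmoment w q hw hq,
    ← ENNReal.ofReal_mul (by rw [pow_mul]; positivity)]
  congr 1
  ring

lemma gpi_meas :
    MeasurableSet {p : ℝ × ℝ × ℝ | 0 < p.1 ∧ 0 < p.2.1 ∧ 0 < p.1 * p.2.1 - p.2.2 ^ 2} := by
  have h1 : MeasurableSet {p : ℝ × ℝ × ℝ | 0 < p.1} := measurableSet_lt (by fun_prop) (by fun_prop)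
  have h2 : MeasurableSet {p : ℝ × ℝ × ℝ | 0 < p.2.1} :=
    measurableSet_lt (by fun_prop) (by fun_prop)
  have h3 : MeasurableSet {p : ℝ × ℝ × ℝ | 0 < p.1 * p.2.1 - p.2.2 ^ 2} :=
    measurableSet_lt (by fun_prop) (by fun_prop)
  exact h1.inter (h2.inter h3)

open Set ENNReal in
/-- The inner `z`-integral, after inserting all the other factors. -/
lemma gpi_inner (q a b c s t : ℝ) (hq : 0 < q) (x y : ℝ) :
    ∫⁻ z, {p : ℝ × ℝ × ℝ | 0 < p.1 ∧ 0 < p.2.1 ∧ 0 < p.1 * p.2.1 - p.2.2 ^ 2}.indicator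
      (fun p => ENNReal.ofReal (p.1 ^ s * p.2.1 ^ t * (p.1 * p.2.1 - p.2.2 ^ 2) ^ (q - 1) *
        Real.exp (-(a * p.1 + b * p.2.1 + 2 * c * p.2.2)))) (x, y, z) =
    (Ioi (0:ℝ)).indicator (fun x => (Ioi (0:ℝ)).indicator (fun y =>
      ∑' k : ℕ, ENNReal.ofReal ((2 * c) ^ (2 * k) / ((2 * k).factorial : ℝ) *
        ProbabilityTheory.beta (k + 1/2) q) *
        (ENNReal.ofReal (x ^ ((q + 1/2 + s + k) - 1) * Real.exp (-(a * x))) *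
        ENNReal.ofReal (y ^ ((q + 1/2 + t + k) - 1) * Real.exp (-(b * y))))) y) x := by
  by_cases hx : 0 < x
  swap
  · simp [indicator, hx]
  by_cases hy : 0 < y
  swap
  · simp [indicator, hy]
  rw [indicator_of_mem (show x ∈ Ioi (0:ℝ) from hx), indicator_of_mem (show y ∈ Ioi (0:ℝ) from hy)]
  have hw : 0 < x * y := mul_pos hx hy
  have hm : MeasurableSet {z : ℝ | 0 < x * y - z ^ 2} := measurableSet_lt (by fun_prop) (by fun_prop)
  have h1 : ∀ z : ℝ, {p : ℝ × ℝ × ℝ | 0 < p.1 ∧ 0 < p.2.1 ∧ 0 < p.1 * p.2.1 - p.2.2 ^ 2}.indicator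
      (fun p => ENNReal.ofReal (p.1 ^ s * p.2.1 ^ t * (p.1 * p.2.1 - p.2.2 ^ 2) ^ (q - 1) *
        Real.exp (-(a * p.1 + b * p.2.1 + 2 * c * p.2.2)))) (x, y, z) =
      ENNReal.ofReal (x ^ s * y ^ t * Real.exp (-(a * x)) * Real.exp (-(b * y))) *
        {z : ℝ | 0 < x * y - z ^ 2}.indicator (fun z =>
          ENNReal.ofReal ((x * y - z ^ 2) ^ (q - 1) * Real.exp (-(2 * c * z)))) z := by
    intro z
    by_cases hz : 0 < x * y - z ^ 2
    · rw [indicator_of_mem (by exact ⟨hx, hy, hz⟩), indicator_of_mem (by exact hz),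
        ← ENNReal.ofReal_mul (by positivity)]
      congr 1
      rw [show -(a * x + b * y + 2 * c * z) = -(a * x) + (-(b * y) + -(2 * c * z)) by ring,
        Real.exp_add, Real.exp_add]
      ring
    · rw [indicator_of_notMem (by rintro ⟨_, _, h⟩; exact hz h), indicator_of_notMem (by exact hz),
        mul_zero]
  simp_rw [h1]
  rw [lintegral_const_mul' _ _ ofReal_ne_top, lintegral_indicator hm, gpi_zint _ _ _ hw hq,
    ← ENNReal.tsum_mul_left]
  congr 1
  funext k
  have hb : 0 < ProbabilityTheory.beta (k + 1/2) q := ProbabilityTheory.beta_pos (by positivity) hq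
  have hc : 0 ≤ (2 * c) ^ (2 * k) := by rw [pow_mul]; positivity
  rw [← ENNReal.ofReal_mul (by positivity), ← ENNReal.ofReal_mul (by positivity),
    ← ENNReal.ofReal_mul (by positivity)]
  congr 1
  rw [Real.mul_rpow hx.le hy.le, show q + 1/2 + s + k - 1 = s + (q + k - 1/2) by ring,
    show q + 1/2 + t + k - 1 = t + (q + k - 1/2) by ring, Real.rpow_add hx, Real.rpow_add hy]
  ring

open Set ENNReal in
lemma gpi_lint (q a b c s t : ℝ) (hq : 0 < q) (ha : 0 < a) (hb : 0 < b) (hs : 0 ≤ s) (ht : 0 ≤ t) :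
    ∫⁻ p in {p : ℝ × ℝ × ℝ | 0 < p.1 ∧ 0 < p.2.1 ∧ 0 < p.1 * p.2.1 - p.2.2 ^ 2},
      ENNReal.ofReal (p.1 ^ s * p.2.1 ^ t * (p.1 * p.2.1 - p.2.2 ^ 2) ^ (q - 1) *
        Real.exp (-(a * p.1 + b * p.2.1 + 2 * c * p.2.2))) =
    ∑' k : ℕ, ENNReal.ofReal ((2 * c) ^ (2 * k) / ((2 * k).factorial : ℝ) *
        ProbabilityTheory.beta (k + 1/2) q) *
      (ENNReal.ofReal ((1 / a) ^ (q + 1/2 + s + k) * Real.Gamma (q + 1/2 + s + k)) *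
      ENNReal.ofReal ((1 / b) ^ (q + 1/2 + t + k) * Real.Gamma (q + 1/2 + t + k))) := by
  have hm := gpi_meas
  have hF : Measurable ({p : ℝ × ℝ × ℝ | 0 < p.1 ∧ 0 < p.2.1 ∧ 0 < p.1 * p.2.1 - p.2.2 ^ 2}.indicator
      (fun p => ENNReal.ofReal (p.1 ^ s * p.2.1 ^ t * (p.1 * p.2.1 - p.2.2 ^ 2) ^ (q - 1) *
        Real.exp (-(a * p.1 + b * p.2.1 + 2 * c * p.2.2))))) :=
    Measurable.indicator (by fun_prop) hm
  rw [← lintegral_indicator hm, Measure.volume_eq_prod, lintegral_prod _ hF.aemeasurable]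
  have h2 : ∀ x : ℝ, ∫⁻ yz : ℝ × ℝ,
      {p : ℝ × ℝ × ℝ | 0 < p.1 ∧ 0 < p.2.1 ∧ 0 < p.1 * p.2.1 - p.2.2 ^ 2}.indicator
      (fun p => ENNReal.ofReal (p.1 ^ s * p.2.1 ^ t * (p.1 * p.2.1 - p.2.2 ^ 2) ^ (q - 1) *
        Real.exp (-(a * p.1 + b * p.2.1 + 2 * c * p.2.2)))) (x, yz) =
      (Ioi (0:ℝ)).indicator (fun x => ∑' k : ℕ,
        ENNReal.ofReal ((2 * c) ^ (2 * k) / ((2 * k).factorial : ℝ) *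
        ProbabilityTheory.beta (k + 1/2) q) *
        (ENNReal.ofReal (x ^ ((q + 1/2 + s + k) - 1) * Real.exp (-(a * x))) *
        ENNReal.ofReal ((1 / b) ^ (q + 1/2 + t + k) * Real.Gamma (q + 1/2 + t + k)))) x := by
    intro x
    have hFx := hF.comp (measurable_prodMk_left (x := x))
    simp only [Function.comp_def] at hFx
    rw [Measure.volume_eq_prod, lintegral_prod _ hFx.aemeasurable]
    simp_rw [gpi_inner q a b c s t hq x]
    by_cases hx : 0 < x
    swap
    · simp [indicator, hx]
    simp_rw [indicator_of_mem (show x ∈ Ioi (0:ℝ) from hx)]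
    rw [lintegral_indicator measurableSet_Ioi, lintegral_tsum (fun k => by fun_prop)]
    congr 1
    funext k
    rw [lintegral_const_mul' _ _ ofReal_ne_top, lintegral_const_mul' _ _ ofReal_ne_top,
      gpi_gamma_lint b _ hb (by positivity)]
  simp_rw [h2]
  rw [lintegral_indicator measurableSet_Ioi, lintegral_tsum (fun k => by fun_prop)]
  congr 1
  funext k
  rw [lintegral_const_mul' _ _ ofReal_ne_top, lintegral_mul_const' _ _ ofReal_ne_top,
      gpi_gamma_lint a _ ha (by positivity)]

lemma gpi_formula (α a b c s t : ℝ) (hα : 1 < α) (ha : 0 < a) (hb : 0 < b)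
    (hs : 0 ≤ s) (ht : 0 ≤ t) :
    wishartMomentIntegral α a b c s t =
      √π * Real.Gamma ((α - 1) / 2) / Real.Gamma (α / 2) *
        ((1 / a) ^ (α / 2 + s) * Real.Gamma (α / 2 + s)) *
        ((1 / b) ^ (α / 2 + t) * Real.Gamma (α / 2 + t)) *
      ∑' k : ℕ, (ascPochhammer ℝ k).eval (α / 2 + s) * (ascPochhammer ℝ k).eval (α / 2 + t) /
        (ascPochhammer ℝ k).eval (α / 2) * (c ^ 2 / (a * b)) ^ k / (k.factorial : ℝ) := by
  have hm := gpi_meas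
  have hq : 0 < (α - 1) / 2 := by linarith
  have hβ : 0 < α / 2 := by linarith
  unfold wishartMomentIntegral
  rw [integral_eq_lintegral_of_nonneg_ae]
  rotate_left
  · refine (ae_restrict_mem hm).mono (fun p hp => ?_)
    obtain ⟨h1, h2, h3⟩ := hp
    simp only [Pi.zero_apply]
    positivity
  · exact Measurable.aestronglyMeasurable (by fun_prop)
  rw [show (α - 3) / 2 = (α - 1) / 2 - 1 by ring, gpi_lint _ a b c s t hq ha hb hs ht,
    ENNReal.tsum_toReal_eq (fun k => by finiteness), ← tsum_mul_left]
  congr 1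
  funext k
  rw [show (α - 1) / 2 + 1/2 = α / 2 by ring]
  have hbt : 0 < ProbabilityTheory.beta (k + 1/2) ((α - 1) / 2) :=
    ProbabilityTheory.beta_pos (by positivity) hq
  have hc : 0 ≤ (2 * c) ^ (2 * k) := by rw [pow_mul]; positivity
  have g1 : 0 < Real.Gamma (α / 2 + s + k) := Real.Gamma_pos_of_pos (by positivity)
  have g2 : 0 < Real.Gamma (α / 2 + t + k) := Real.Gamma_pos_of_pos (by positivity)
  have g3 : 0 < Real.Gamma (α / 2) := Real.Gamma_pos_of_pos (by positivity)
  rw [← ENNReal.ofReal_mul (by positivity), ← ENNReal.ofReal_mul (by positivity),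
    ENNReal.toReal_ofReal (by positivity)]
  unfold ProbabilityTheory.beta
  rw [show (k + 1/2 + (α - 1) / 2 : ℝ) = α / 2 + k by ring, gpi_Gamma_add _ hβ,
    gpi_Gamma_add _ (by positivity : 0 < α / 2 + s), gpi_Gamma_add _ (by positivity : 0 < α / 2 + t),
    Real.rpow_add (by positivity : 0 < 1 / a), Real.rpow_add (by positivity : 0 < 1 / b),
    Real.rpow_natCast, Real.rpow_natCast]
  have hP := gpi_poch_pos (α / 2) hβ k
  have hG : Real.Gamma ((k:ℝ) + 1/2) = (2 * k).factorial * √π / (4 ^ k * k.factorial) := by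
    rw [eq_div_iff (by positivity), ← gpi_Gamma_half]; ring
  rw [hG, mul_pow 2 c, pow_mul 2, pow_mul c, div_pow (c ^ 2), mul_pow a b, one_div_pow, one_div_pow]
  norm_num only
  generalize (1 / a) ^ (α / 2 + s) = u
  generalize (1 / b) ^ (α / 2 + t) = v
  generalize (ascPochhammer ℝ k).eval (α / 2 + s) = w
  generalize (ascPochhammer ℝ k).eval (α / 2 + t) = w'
  have : ((2 * k).factorial : ℝ) ≠ 0 := by positivity
  have : (k.factorial : ℝ) ≠ 0 := by positivity
  field_simp
/-- Quantitative Gaussian-product-type inequality for the bivariate Wishart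
distribution: with `ρ² = c²/(ab)`,
`I(ν₁,ν₂) I(0,0) ≥ I(ν₁,0) I(0,ν₂) [1 + (1−ρ²)^{α/2+ν₁+ν₂} (₀F₁(α/2; ν₁ν₂ρ²) − 1)]`
`≥ I(ν₁,0) I(0,ν₂)`. -/
theorem wishart_GPI_2x2 (α a b c ν₁ ν₂ : ℝ)
    (hα : 1 < α) (ha : 0 < a) (hdet : 0 < a * b - c ^ 2)
    (hν₁ : 0 ≤ ν₁) (hν₂ : 0 ≤ ν₂) :
    wishartMomentIntegral α a b c ν₁ ν₂ * wishartMomentIntegral α a b c 0 0 ≥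
        wishartMomentIntegral α a b c ν₁ 0 * wishartMomentIntegral α a b c 0 ν₂ *
          (1 + (1 - c ^ 2 / (a * b)) ^ (α / 2 + ν₁ + ν₂) *
            ((∑' k : ℕ, (ν₁ * ν₂) ^ k * (c ^ 2 / (a * b)) ^ k /
                ((ascPochhammer ℝ k).eval (α / 2) * (k.factorial : ℝ))) - 1)) ∧
      wishartMomentIntegral α a b c ν₁ 0 * wishartMomentIntegral α a b c 0 ν₂ *
          (1 + (1 - c ^ 2 / (a * b)) ^ (α / 2 + ν₁ + ν₂) *
            ((∑' k : ℕ, (ν₁ * ν₂) ^ k * (c ^ 2 / (a * b)) ^ k /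
                ((ascPochhammer ℝ k).eval (α / 2) * (k.factorial : ℝ))) - 1)) ≥
        wishartMomentIntegral α a b c ν₁ 0 * wishartMomentIntegral α a b c 0 ν₂ := by
  have hab : 0 < a * b := by nlinarith [sq_nonneg c]
  have hb : 0 < b := pos_of_mul_pos_right hab ha.le
  have hβ : 0 < α / 2 := by linarith
  have hr0 : 0 ≤ c ^ 2 / (a * b) := by positivity
  have hr1 : c ^ 2 / (a * b) < 1 := by rw [div_lt_one hab]; linarith
  have F := fun s t hs ht => gpi_formula α a b c s t hα ha hb hs ht
  have hser := gpi_series (α / 2) ν₁ ν₂ _ hβ hν₁ hν₂ hr0 hr1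
  have hge := gpi_zeroF_ge (α / 2) ν₁ ν₂ _ hβ hν₁ hν₂ hr0 hr1
  rw [F _ _ hν₁ hν₂, F _ _ le_rfl le_rfl, F _ _ hν₁ le_rfl, F _ _ le_rfl hν₂]
  simp only [add_zero]
  generalize hr : c ^ 2 / (a * b) = r at *
  have hP := fun k => (gpi_poch_pos (α / 2) hβ k).ne'
  have e1 : ∀ x : ℝ, ∑' k : ℕ, (ascPochhammer ℝ k).eval x * (ascPochhammer ℝ k).eval (α / 2) /
        (ascPochhammer ℝ k).eval (α / 2) * r ^ k / (k.factorial : ℝ) = (1 - r) ^ (-x) := by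
    intro x
    rw [← (gpi_negbin x r hr0 hr1).tsum_eq]
    congr 1
    funext k
    rw [mul_div_cancel_right₀ _ (hP k)]
  have e2 : ∀ x : ℝ, ∑' k : ℕ, (ascPochhammer ℝ k).eval (α / 2) * (ascPochhammer ℝ k).eval x /
        (ascPochhammer ℝ k).eval (α / 2) * r ^ k / (k.factorial : ℝ) = (1 - r) ^ (-x) := by
    intro x
    rw [← e1 x]
    congr 1
    funext k
    rw [mul_comm ((ascPochhammer ℝ k).eval x)]
  rw [e1, e1, e2]
  have h1r : 0 < 1 - r := by linarith
  generalize (∑' k : ℕ, (ν₁ * ν₂) ^ k * r ^ k /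
    ((ascPochhammer ℝ k).eval (α / 2) * (k.factorial : ℝ))) = Z at *
  generalize (∑' k : ℕ, (ascPochhammer ℝ k).eval (α / 2 + ν₁) *
    (ascPochhammer ℝ k).eval (α / 2 + ν₂) /
    (ascPochhammer ℝ k).eval (α / 2) * r ^ k / (k.factorial : ℝ)) = S at *
  have g0 : 0 < Real.Gamma ((α - 1) / 2) := Real.Gamma_pos_of_pos (by linarith)
  have g1 : 0 < Real.Gamma (α / 2 + ν₁) := Real.Gamma_pos_of_pos (by positivity)
  have g2 : 0 < Real.Gamma (α / 2 + ν₂) := Real.Gamma_pos_of_pos (by positivity)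
  have g3 : 0 < Real.Gamma (α / 2) := Real.Gamma_pos_of_pos (by positivity)
  set K := √π * Real.Gamma ((α - 1) / 2) / Real.Gamma (α / 2) with hK
  have hK0 : 0 < K := by positivity
  set A0 := (1 / a) ^ (α / 2) * Real.Gamma (α / 2) with hA0
  set A1 := (1 / a) ^ (α / 2 + ν₁) * Real.Gamma (α / 2 + ν₁) with hA1
  set B0 := (1 / b) ^ (α / 2) * Real.Gamma (α / 2) with hB0
  set B1 := (1 / b) ^ (α / 2 + ν₂) * Real.Gamma (α / 2 + ν₂) with hB1
  have a0 : 0 < A0 := by positivity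
  have a1 : 0 < A1 := by positivity
  have b0 : 0 < B0 := by positivity
  have b1 : 0 < B1 := by positivity
  have hT : (1 - r) ^ (-(α / 2 + ν₁)) * (1 - r) ^ (-(α / 2 + ν₂)) =
      (1 - r) ^ (-(α / 2)) * (1 - r) ^ (-(α / 2 + ν₁ + ν₂)) := by
    rw [← Real.rpow_add h1r, ← Real.rpow_add h1r]
    congr 1
    ring
  have hU : (1 - r) ^ (-(α / 2 + ν₁ + ν₂)) * (1 - r) ^ (α / 2 + ν₁ + ν₂) = 1 := by
    rw [← Real.rpow_add h1r, neg_add_cancel, Real.rpow_zero]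
  constructor
  · calc K * A1 * B0 * (1 - r) ^ (-(α / 2 + ν₁)) * (K * A0 * B1 * (1 - r) ^ (-(α / 2 + ν₂))) *
          (1 + (1 - r) ^ (α / 2 + ν₁ + ν₂) * (Z - 1))
        = K * A1 * B0 * (K * A0 * B1) * ((1 - r) ^ (-(α / 2 + ν₁)) * (1 - r) ^ (-(α / 2 + ν₂))) *
          (1 + (1 - r) ^ (α / 2 + ν₁ + ν₂) * (Z - 1)) := by ring
      _ = K * A1 * B0 * (K * A0 * B1) * (1 - r) ^ (-(α / 2)) *
          ((1 - r) ^ (-(α / 2 + ν₁ + ν₂)) +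
            ((1 - r) ^ (-(α / 2 + ν₁ + ν₂)) * (1 - r) ^ (α / 2 + ν₁ + ν₂)) * (Z - 1)) := by
          rw [hT]; ring
      _ = K * A1 * B0 * (K * A0 * B1) * (1 - r) ^ (-(α / 2)) *
          ((1 - r) ^ (-(α / 2 + ν₁ + ν₂)) + (Z - 1)) := by rw [hU, one_mul]
      _ ≤ K * A1 * B0 * (K * A0 * B1) * (1 - r) ^ (-(α / 2)) * S := by gcongr
      _ = _ := by ring
  · refine le_mul_of_one_le_right (by positivity) ?_
    have : 0 ≤ (1 - r) ^ (α / 2 + ν₁ + ν₂) * (Z - 1) := mul_nonneg (by positivity) (by linarith)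
    linarith
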